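/- arXiv:2409.07700 — 3 statements merged into one kernel-verified Lean document; each statement's English description precedes it below -/
import Mathlib

section
/- Let X be a set and φ : ℝ≥0 → X → X a map satisfying φ(0, x) = x and the semigroup (recursive) property φ(τ + ϑ, x) = φ(τ, φ(ϑ, x)) for all τ, ϑ ≥ 0 and x ∈ X. Let Cs, Cb ⊆ X with Cb ⊆ Cs, and suppose Cb is forward invariant under φ, i.e. x ∈ Cb implies φ(t, x) ∈ Cb for all t ≥ 0. Fix T > 0 and define Cd = {x ∈ X : φ(τ, x) ∈ Cs for all τ ∈ [0,T], and φ(T, x) ∈ Cb}. Then Cd is forward invariant under φ: x ∈ Cd implies φ(ϑ, x) ∈ Cd for all ϑ ≥ 0. -/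
/-!
Since `Cb ⊆ Cs` is forward invariant, a trajectory that is in `Cs` up to time `T` and in `Cb` at
time `T` is in `Cs` forever and in `Cb` from time `T` on. By the semigroup property, moving along
the trajectory shifts time forward, and both of these conditions survive such a shift.
-/

section BackupTrajectories

open Set

variable {𝕋 X : Type*}

/-- The semigroup property of a flow in forward time. Nothing is asked of `φ` at negative times,
so that a semiflow may be given by a function on all of `ℝ`. -/
def IsForwardSemigroup [AddZero 𝕋] [LE 𝕋] (φ : 𝕋 → X → X) : Prop :=
  ∀ s t : 𝕋, 0 ≤ s → 0 ≤ t → ∀ x, φ (s + t) x = φ s (φ t x)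

/-- The implicitly defined set `Cd` of a safe set `S`, a backup set `B` and a horizon `T`:
the states whose trajectory under `φ` stays in `S` during `[0, T]` and is in `B` at time `T`. -/
def safeReachSet [Zero 𝕋] [Preorder 𝕋] (φ : 𝕋 → X → X) (S B : Set X) (T : 𝕋) : Set X :=
  {x | (∀ t ∈ Icc 0 T, φ t x ∈ S) ∧ φ T x ∈ B}

variable {φ : 𝕋 → X → X} {S B : Set X} {T : 𝕋} {x : X} [AddCommMonoid 𝕋]

theorem IsForwardSemigroup.mem_of_le [PartialOrder 𝕋] [IsOrderedCancelAddMonoid 𝕋]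
    [ExistsAddOfLE 𝕋] (hφ : IsForwardSemigroup φ) (hB : IsForwardInvariant φ B) (hT : 0 ≤ T)
    (hx : φ T x ∈ B) {t : 𝕋} (hTt : T ≤ t) : φ t x ∈ B := by
  obtain ⟨s, hs, rfl⟩ := exists_nonneg_add_of_le hTt
  rw [add_comm, hφ s T hs hT]
  exact hB hs hx

variable [LinearOrder 𝕋] [IsOrderedCancelAddMonoid 𝕋] [ExistsAddOfLE 𝕋]

theorem mem_safeReachSet_iff_forall (hφ : IsForwardSemigroup φ) (hBS : B ⊆ S)
    (hB : IsForwardInvariant φ B) (hT : 0 ≤ T) :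
    x ∈ safeReachSet φ S B T ↔ (∀ t, 0 ≤ t → φ t x ∈ S) ∧ ∀ t, T ≤ t → φ t x ∈ B := by
  constructor
  · rintro ⟨hS, hTB⟩
    have after : ∀ t, T ≤ t → φ t x ∈ B := fun t => hφ.mem_of_le hB hT hTB
    refine ⟨fun t ht => ?_, after⟩
    rcases le_total t T with htT | hTt
    · exact hS t ⟨ht, htT⟩
    · exact hBS (after t hTt)
  · rintro ⟨hS, after⟩
    exact ⟨fun t ht => hS t ht.1, after T le_rfl⟩

theorem Cd_forward_invariant_general (hφ : IsForwardSemigroup φ) (hBS : B ⊆ S)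
    (hB : IsForwardInvariant φ B) (hT : 0 ≤ T) :
    IsForwardInvariant φ (safeReachSet φ S B T) := by
  intro s hs x hx
  rw [mem_safeReachSet_iff_forall hφ hBS hB hT] at hx ⊢
  obtain ⟨hS, after⟩ := hx
  have shift : ∀ t, 0 ≤ t → φ t (φ s x) = φ (t + s) x := fun t ht => (hφ t s ht hs x).symm
  constructor
  · intro t ht
    rw [shift t ht]
    exact hS _ (add_nonneg ht hs)
  · intro t hTt
    rw [shift t (hT.trans hTt)]
    exact after _ (le_add_of_le_of_nonneg hTt hs)

end BackupTrajectories

/-- Lemma 3: the implicitly defined set `Cd` (states whose disturbed backup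
trajectory stays in `Cs` on `[0,T]` and reaches `Cb` at time `T`) is forward
invariant under the disturbed flow `φ`. -/
theorem Cd_forward_invariant
    {X : Type*} (φ : ℝ → X → X)
    (hφ0 : ∀ x : X, φ 0 x = x)
    (hsemi : ∀ τ ϑ : ℝ, 0 ≤ τ → 0 ≤ ϑ → ∀ x : X, φ (τ + ϑ) x = φ τ (φ ϑ x))
    (Cs Cb : Set X) (hsub : Cb ⊆ Cs)
    (hCbInv : ∀ x ∈ Cb, ∀ t : ℝ, 0 ≤ t → φ t x ∈ Cb)
    (T : ℝ) (hT : 0 < T) :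
    ∀ x ∈ {x : X | (∀ τ ∈ Set.Icc (0:ℝ) T, φ τ x ∈ Cs) ∧ φ T x ∈ Cb},
      ∀ ϑ : ℝ, 0 ≤ ϑ →
        φ ϑ x ∈ {x : X | (∀ τ ∈ Set.Icc (0:ℝ) T, φ τ x ∈ Cs) ∧ φ T x ∈ Cb} :=
  fun _ hx _ hϑ => Cd_forward_invariant_general hsemi hsub
    (fun t ht x hx => hCbInv x hx t ht) hT.le hϑ hx
end

section
/- Let α : ℝ → ℝ be locally Lipschitz with α(0) = 0, and let z : [0, ∞) → ℝ be differentiable with z'(t) ≥ −α(z(t)) for all t ≥ 0. If z(0) ≥ 0, then z(t) ≥ 0 for all t ≥ 0. -/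
/-!
For small `ε > 0`, the exponential `ε * exp (M * (t - a))` is a fence which `-z` cannot cross. At a
contact time `z` is negative and close to `0`, where `α y ≤ K * |y|`, so that `-z' ≤ K * |z|` is
smaller than the growth rate `M * |z|` of the fence as soon as `M > |K|`. Letting `ε → 0` gives
`-z ≤ 0`.
-/

open Filter Set Topology

section Fence

variable {f f' : ℝ → ℝ} {a b : ℝ}

theorem image_le_mul_exp_of_deriv_right_lt_mul {ε M : ℝ} (hf : ContinuousOn f (Icc a b))
    (hf' : ∀ x ∈ Ico a b, HasDerivWithinAt f (f' x) (Ici x) x) (ha : f a ≤ ε)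
    (bound : ∀ x ∈ Ico a b, f x = ε * Real.exp (M * (x - a)) → f' x < M * f x) :
    ∀ ⦃x⦄, x ∈ Icc a b → f x ≤ ε * Real.exp (M * (x - a)) := by
  have fence_deriv (x : ℝ) : HasDerivAt (fun x ↦ ε * Real.exp (M * (x - a)))
      (M * (ε * Real.exp (M * (x - a)))) x := by
    simpa only [gronwallBound_ε0, add_zero] using hasDerivAt_gronwallBound_shift ε M 0 x a
  exact image_le_of_deriv_right_lt_deriv_boundary hf hf' (by simpa using ha) fence_deriv
    fun x hx hcontact ↦ hcontact ▸ bound x hx hcontact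

theorem image_nonpos_of_deriv_right_le_mul {K δ : ℝ} (hδ : 0 < δ) (hf : ContinuousOn f (Icc a b))
    (hf' : ∀ x ∈ Ico a b, HasDerivWithinAt f (f' x) (Ici x) x) (ha : f a ≤ 0)
    (bound : ∀ x ∈ Ico a b, f x ∈ Ioo 0 δ → f' x ≤ K * f x) :
    ∀ ⦃x⦄, x ∈ Icc a b → f x ≤ 0 := by
  intro x hx
  set M := |K| + 1
  have hKM : K < M := (le_abs_self K).trans_lt (lt_add_one _)
  have fence_tendsto (t : ℝ) :
      Tendsto (fun ε : ℝ ↦ ε * Real.exp (M * (t - a))) (𝓝[>] 0) (𝓝 0) :=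
    ((continuous_mul_const _).tendsto' 0 0 (zero_mul _)).mono_left nhdsWithin_le_nhds
  refine ge_of_tendsto (fence_tendsto x) ?_
  filter_upwards [self_mem_nhdsWithin, (fence_tendsto b).eventually_lt_const hδ]
    with ε (hε : 0 < ε) hεδ
  refine image_le_mul_exp_of_deriv_right_lt_mul hf hf' (ha.trans hε.le) (fun t ht hcontact ↦ ?_) hx
  have hpos : 0 < f t := hcontact ▸ by positivity
  have hlt : f t < δ := calc
    f t = ε * Real.exp (M * (t - a)) := hcontact
    _ ≤ ε * Real.exp (M * (b - a)) := by gcongr; exact ht.2.le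
    _ < δ := hεδ
  exact (bound t ht ⟨hpos, hlt⟩).trans_lt (mul_lt_mul_of_pos_right hKM hpos)

end Fence

theorem exists_eventually_le_add_mul_dist_of_locallyLipschitz {X : Type*} [PseudoMetricSpace X]
    {f : X → ℝ} (hf : LocallyLipschitz f) (x : X) :
    ∃ K : ℝ, ∀ᶠ y in 𝓝 x, f y ≤ f x + K * dist y x := by
  obtain ⟨K, U, hU, hK⟩ := hf x
  refine ⟨K, ?_⟩
  filter_upwards [hU] with y hy using hK.le_add_mul hy (mem_of_mem_nhds hU)

theorem barrier_comparison_principle_general {α z z' : ℝ → ℝ} {K a b : ℝ}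
    (hα : ∀ᶠ y in 𝓝[<] 0, α y ≤ K * |y|) (hz : ContinuousOn z (Icc a b))
    (hz' : ∀ t ∈ Ico a b, HasDerivWithinAt z (z' t) (Ici t) t)
    (hineq : ∀ t ∈ Ico a b, -α (z t) ≤ z' t) (ha : 0 ≤ z a) :
    ∀ ⦃t⦄, t ∈ Icc a b → 0 ≤ z t := by
  obtain ⟨l, hl : l < 0, hlα⟩ := mem_nhdsLT_iff_exists_Ioo_subset.1 hα
  intro t ht
  refine neg_nonpos.1 (image_nonpos_of_deriv_right_le_mul (f := fun t ↦ -z t) (K := K)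
    (neg_pos.2 hl) hz.neg (fun s hs ↦ (hz' s hs).neg) (neg_nonpos.2 ha) ?_ ht)
  rintro s hs ⟨hpos, hlt⟩
  have hzneg : z s < 0 := neg_pos.1 hpos
  calc
    -z' s ≤ α (z s) := neg_le.1 (hineq s hs)
    _ ≤ K * |z s| := hlα ⟨neg_lt_neg_iff.1 hlt, hzneg⟩
    _ = K * -z s := by rw [abs_of_neg hzneg]

/-- Scalar comparison principle underlying the CBF forward-invariance theorem
(Theorem 1): a barrier value `z` with `ż(t) ≥ −α(z(t))` for a locally Lipschitz
function `α` with `α(0) = 0`, starting nonnegative, remains nonnegative. -/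
theorem barrier_comparison_principle
    (α : ℝ → ℝ) (hα : LocallyLipschitz α) (hα0 : α 0 = 0)
    (z z' : ℝ → ℝ)
    (hderiv : ∀ t : ℝ, 0 ≤ t → HasDerivAt z (z' t) t)
    (hineq : ∀ t : ℝ, 0 ≤ t → z' t ≥ -α (z t))
    (h0 : z 0 ≥ 0) :
    ∀ t : ℝ, 0 ≤ t → z t ≥ 0 := by
  intro t ht
  obtain ⟨K, hK⟩ := exists_eventually_le_add_mul_dist_of_locallyLipschitz hα 0
  simp only [hα0, zero_add, dist_zero_right, Real.norm_eq_abs] at hK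
  exact barrier_comparison_principle_general (nhdsWithin_le_nhds hK)
    (fun s hs ↦ (hderiv s hs.1).continuousAt.continuousWithinAt)
    (fun s hs ↦ (hderiv s hs.1).hasDerivWithinAt) (fun s hs ↦ hineq s hs.1) h0 ⟨ht, le_rfl⟩
end

section
/- Let E be a real normed vector space of dimension n, and let f : E → E and g : E → (ℝ^m →ₗ E) be the drift and input maps of the control-affine system. Let ξ ≥ 0 and T > 0. Let φn : [0,T] × E → E be the nominal backup flow and suppose that for each τ ∈ [0,T] the map x ↦ φn(τ, x) is differentiable with (Fréchet) derivative Φ(τ, x). Let h, h_b : E → ℝ be continuously differentiable, and let α, α_b : ℝ → ℝ be locally Lipschitz, strictly increasing functions with α(0) = α_b(0) = 0. Let ε : [0,T] → ℝ and ε_b ∈ ℝ be given constants. Let x : [0,∞) → E be differentiable with x'(t) = f(x(t)) + g(x(t)) u(t) + d(t) where u : [0,∞) → ℝ^m and d : [0,∞) → E satisfies ‖d(t)‖ ≤ ξ for all t. Suppose that for all t ≥ 0 and all τ ∈ [0,T]: ∇h(φn(τ, x(t))) ∘ Φ(τ, x(t)) applied to (f(x(t)) + g(x(t)) u(t)), minus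 ξ‖∇h(φn(τ,x(t))) ∘ Φ(τ,x(t))‖, is ≥ −α(h(φn(τ, x(t))) − ε(τ)); and ∇h_b(φn(T, x(t))) ∘ Φ(T, x(t)) applied to (f(x(t)) + g(x(t)) u(t)), minus ξ‖∇h_b(φn(T,x(t))) ∘ Φ(T,x(t))‖, is ≥ −α_b(h_b(φn(T, x(t))) − ε_b). If h(φn(τ, x(0))) ≥ ε(τ) for all τ ∈ [0,T] and h_b(φn(T, x(0))) ≥ ε_b, then for all t ≥ 0, h(φn(τ, x(t))) ≥ ε(τ) for all τ ∈ [0,T] and h_b(φn(T, x(t))) ≥ ε_b (i.e., x(t) remains in the set Ci for all t ≥ 0). -/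
/-!
Each inequality defining the tightened implicit set is propagated separately. Along the trajectory,
`B = h ∘ φn τ` has derivative `L (v + d)` with `L = ∇h ∘ Φ` and `v` the undisturbed velocity, and
`L d ≥ -ξ ‖L‖`, so the robustified constraint yields `(B - ε τ)' ≥ -α (B - ε τ)` for every
admissible disturbance. As `α ≤ 0` on the negative reals, `B - ε τ` is nondecreasing wherever it is
negative, and therefore never becomes negative if it starts nonnegative.
-/

open Set

/-- The tightened implicit set `Ci` of the backup CBF construction: the states from which the
nominal backup flow `φn` satisfies the tightened safety constraint on `[0, T]` and reaches the
tightened backup set at time `T`. The values of `φn` and `ε` off `[0, T]` are junk. -/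
def tightenedImplicitSet {E : Type*} (T : ℝ) (φn : ℝ → E → E) (h hb : E → ℝ) (ε : ℝ → ℝ) (εb : ℝ) :
    Set E :=
  {y | (∀ τ ∈ Icc 0 T, ε τ ≤ h (φn τ y)) ∧ εb ≤ hb (φn T y)}

theorem nonneg_of_deriv_right_nonneg_of_neg {ψ ψ' : ℝ → ℝ} {a b : ℝ}
    (hψ : ContinuousOn ψ (Icc a b))
    (hψ' : ∀ t ∈ Ico a b, HasDerivWithinAt ψ (ψ' t) (Ici t) t)
    (hnonneg : ∀ t ∈ Ico a b, ψ t < 0 → 0 ≤ ψ' t) (ha : 0 ≤ ψ a) :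
    ∀ t ∈ Icc a b, 0 ≤ ψ t := by
  intro t ht
  refine le_of_forall_pos_le_add fun δ hδ ↦ ?_
  have hlen : 0 < t - a + 1 := by linarith [ht.1]
  have hslope : 0 < δ / (t - a + 1) := by positivity
  -- The barrier increases strictly because `-ψ` may have derivative zero where it is positive.
  let barrier : ℝ → ℝ := fun s ↦ δ / (t - a + 1) * (s - a + 1)
  have hbarrier (s : ℝ) : HasDerivAt barrier (δ / (t - a + 1)) s := by
    simpa using (((hasDerivAt_id s).sub_const a).add_const 1).const_mul (δ / (t - a + 1))
  have hle : -ψ t ≤ barrier t := by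
    refine image_le_of_deriv_right_lt_deriv_boundary hψ.neg
      (fun s hs ↦ (hψ' s hs).neg) ?_ hbarrier (fun s hs heq ↦ ?_) ht
    · simpa [barrier] using (neg_nonpos.2 ha).trans hslope.le
    · have hpos : 0 < barrier s := mul_pos hslope (by linarith [hs.1])
      have hneg : ψ s < 0 := neg_pos.1 (hpos.trans_eq heq.symm)
      exact (neg_nonpos.2 (hnonneg s hs hneg)).trans_lt hslope
  have hend : barrier t = δ := div_mul_cancel₀ δ hlen.ne'
  linarith

section RobustBarrier

variable {E : Type*} [NormedAddCommGroup E] [NormedSpace ℝ E]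

theorem apply_sub_mul_norm_le_apply_add (L : E →L[ℝ] ℝ) (v : E) {w : E} {ξ : ℝ}
    (hw : ‖w‖ ≤ ξ) : L v - ξ * ‖L‖ ≤ L (v + w) := by
  have hLw : -(ξ * ‖L‖) ≤ L w :=
    (abs_le.1 ((L.le_of_opNorm_le_of_le le_rfl hw).trans_eq (mul_comm ‖L‖ ξ))).1
  rw [map_add]
  linarith

theorem le_of_robust_barrier_condition {B : E → ℝ} {B' : E → E →L[ℝ] ℝ}
    (hB : ∀ y, HasFDerivAt B (B' y) y) {α : ℝ → ℝ} (hα : ∀ r < 0, α r ≤ 0) {c ξ a b : ℝ}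
    {x v d : ℝ → E} (hd : ∀ t ∈ Ico a b, ‖d t‖ ≤ ξ) (hxc : ContinuousOn x (Icc a b))
    (hx : ∀ t ∈ Ico a b, HasDerivWithinAt x (v t + d t) (Ici t) t)
    (hcon : ∀ t ∈ Ico a b, -α (B (x t) - c) ≤ B' (x t) (v t) - ξ * ‖B' (x t)‖)
    (ha : c ≤ B (x a)) : ∀ t ∈ Icc a b, c ≤ B (x t) := by
  have hBc : Continuous B := continuous_iff_continuousAt.2 fun y ↦ (hB y).continuousAt
  have hBx (t : ℝ) (ht : t ∈ Ico a b) :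
      HasDerivWithinAt (fun s ↦ B (x s) - c) (B' (x t) (v t + d t)) (Ici t) t :=
    ((hB (x t)).comp_hasDerivWithinAt t (hx t ht)).sub_const c
  have hnonneg (t : ℝ) (ht : t ∈ Ico a b) (hneg : B (x t) - c < 0) :
      0 ≤ B' (x t) (v t + d t) :=
    calc
      0 ≤ -α (B (x t) - c) := neg_nonneg.2 (hα _ hneg)
      _ ≤ B' (x t) (v t) - ξ * ‖B' (x t)‖ := hcon t ht
      _ ≤ B' (x t) (v t + d t) := apply_sub_mul_norm_le_apply_add _ _ (hd t ht)
  exact fun t ht ↦ sub_nonneg.1 <| nonneg_of_deriv_right_nonneg_of_neg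
    ((hBc.comp_continuousOn hxc).sub continuousOn_const) hBx hnonneg (sub_nonneg.2 ha) t ht

theorem dr_bcbf_main_general {ξ T : ℝ} (hT : 0 ≤ T)
    {φn : ℝ → E → E} {Φ : ℝ → E → E →L[ℝ] E}
    (hΦ : ∀ τ ∈ Icc 0 T, ∀ y, HasFDerivAt (φn τ) (Φ τ y) y)
    {h hb : E → ℝ} (hh : Differentiable ℝ h) (hhb : Differentiable ℝ hb)
    {α αb : ℝ → ℝ} (hα : ∀ r < 0, α r ≤ 0) (hαb : ∀ r < 0, αb r ≤ 0)
    {ε : ℝ → ℝ} {εb : ℝ} {x v d : ℝ → E} (hd : ∀ t, 0 ≤ t → ‖d t‖ ≤ ξ)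
    (hxc : ContinuousOn x (Ici 0))
    (hx : ∀ t, 0 ≤ t → HasDerivWithinAt x (v t + d t) (Ici t) t)
    (hcon : ∀ t, 0 ≤ t → ∀ τ ∈ Icc 0 T,
      -α (h (φn τ (x t)) - ε τ) ≤ ((fderiv ℝ h (φn τ (x t))).comp (Φ τ (x t))) (v t)
        - ξ * ‖(fderiv ℝ h (φn τ (x t))).comp (Φ τ (x t))‖)
    (hconb : ∀ t, 0 ≤ t →
      -αb (hb (φn T (x t)) - εb) ≤ ((fderiv ℝ hb (φn T (x t))).comp (Φ T (x t))) (v t)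
        - ξ * ‖(fderiv ℝ hb (φn T (x t))).comp (Φ T (x t))‖)
    (hinit : x 0 ∈ tightenedImplicitSet T φn h hb ε εb) {t : ℝ} (ht : 0 ≤ t) :
    x t ∈ tightenedImplicitSet T φn h hb ε εb := by
  have hxct : ContinuousOn x (Icc 0 t) := hxc.mono Icc_subset_Ici_self
  have chain {k : E → ℝ} (hk : Differentiable ℝ k) {τ : ℝ} (hτ : τ ∈ Icc 0 T) (y : E) :
      HasFDerivAt (fun z ↦ k (φn τ z)) ((fderiv ℝ k (φn τ y)).comp (Φ τ y)) y :=
    (hk (φn τ y)).hasFDerivAt.comp y (hΦ τ hτ y)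
  refine ⟨fun τ hτ ↦ ?safety, ?terminal⟩
  case safety =>
    exact le_of_robust_barrier_condition (chain hh hτ) hα (fun s hs ↦ hd s hs.1) hxct
      (fun s hs ↦ hx s hs.1) (fun s hs ↦ hcon s hs.1 τ hτ) (hinit.1 τ hτ) t (right_mem_Icc.2 ht)
  case terminal =>
    exact le_of_robust_barrier_condition (chain hhb (right_mem_Icc.2 hT)) hαb
      (fun s hs ↦ hd s hs.1) hxct (fun s hs ↦ hx s hs.1) (fun s hs ↦ hconb s hs.1) hinit.2 t
      (right_mem_Icc.2 ht)

end RobustBarrier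

/-- Theorem 5 (main result): any control signal satisfying the robustified
backup CBF constraints renders the tightened implicit set `Ci` forward
invariant along the disturbed closed-loop trajectory `x(t)` for every
disturbance bounded in norm by `ξ`. -/
theorem dr_bcbf_main
    {E : Type*} [NormedAddCommGroup E] [NormedSpace ℝ E] [FiniteDimensional ℝ E]
    (n m : ℕ) (hdim : Module.finrank ℝ E = n)
    (f : E → E) (g : E → (Fin m → ℝ) →ₗ[ℝ] E)
    (ξ : ℝ) (hξ : 0 ≤ ξ) (T : ℝ) (hT : 0 < T)
    (φn : ℝ → E → E) (Φ : ℝ → E → E →L[ℝ] E)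
    (hΦ : ∀ τ ∈ Set.Icc (0:ℝ) T, ∀ y : E, HasFDerivAt (φn τ) (Φ τ y) y)
    (h hb : E → ℝ) (hh : ContDiff ℝ 1 h) (hhb : ContDiff ℝ 1 hb)
    (α αb : ℝ → ℝ)
    (hαLip : LocallyLipschitz α) (hαbLip : LocallyLipschitz αb)
    (hαmono : StrictMono α) (hαbmono : StrictMono αb)
    (hα0 : α 0 = 0) (hαb0 : αb 0 = 0)
    (ε : ℝ → ℝ) (εb : ℝ)
    (x : ℝ → E) (u : ℝ → Fin m → ℝ) (d : ℝ → E)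
    (hd : ∀ t : ℝ, 0 ≤ t → ‖d t‖ ≤ ξ)
    (hx : ∀ t : ℝ, 0 ≤ t → HasDerivAt x (f (x t) + g (x t) (u t) + d t) t)
    (hcon : ∀ t : ℝ, 0 ≤ t → ∀ τ ∈ Set.Icc (0:ℝ) T,
      ((fderiv ℝ h (φn τ (x t))).comp (Φ τ (x t))) (f (x t) + g (x t) (u t))
          - ξ * ‖(fderiv ℝ h (φn τ (x t))).comp (Φ τ (x t))‖
        ≥ -α (h (φn τ (x t)) - ε τ))
    (hconb : ∀ t : ℝ, 0 ≤ t →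
      ((fderiv ℝ hb (φn T (x t))).comp (Φ T (x t))) (f (x t) + g (x t) (u t))
          - ξ * ‖(fderiv ℝ hb (φn T (x t))).comp (Φ T (x t))‖
        ≥ -αb (hb (φn T (x t)) - εb))
    (hinit : (∀ τ ∈ Set.Icc (0:ℝ) T, h (φn τ (x 0)) ≥ ε τ) ∧ hb (φn T (x 0)) ≥ εb) :
    ∀ t : ℝ, 0 ≤ t →
      (∀ τ ∈ Set.Icc (0:ℝ) T, h (φn τ (x t)) ≥ ε τ) ∧ hb (φn T (x t)) ≥ εb := fun _t ht ↦
  dr_bcbf_main_general hT.le hΦ (hh.differentiable one_ne_zero) (hhb.differentiable one_ne_zero)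
    (fun _r hr ↦ ((hαmono hr).trans_eq hα0).le) (fun _r hr ↦ ((hαbmono hr).trans_eq hαb0).le) hd
    (fun t ht ↦ (hx t ht).continuousAt.continuousWithinAt)
    (fun t ht ↦ (hx t ht).hasDerivWithinAt) hcon hconb hinit ht
end
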